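/- For every integer k ≥ 1 there exists a finite simple graph G on 3k + 1 vertices with exactly 6k = 2(3k+1) − 2 edges that contains no cycle of length at least 5. (Such a graph is obtained by taking k pairwise disjoint triangles and adding one additional vertex adjacent to every other vertex.) -/

import Mathlib

open SimpleGraph

/-- `G` contains a cycle of length `m`. -/
def hasCycleLength {α : Type*} (G : SimpleGraph α) (m : ℕ) : Prop :=
  ∃ (a : α) (w : G.Walk a a), w.IsCycle ∧ w.length = m

/-!
Deleting a vertex from a cycle of length `m` leaves a path on at least `m - 1` vertices, and a path
lies in a single connected component. Hence in the cone over a graph whose components have at most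
`n` vertices, every cycle has length at most `n + 1`. The cone over `k` disjoint triangles has
`3k` edges at the apex and `3k` edges in the triangles.
-/

section Cycles

variable {V W : Type*} {G : SimpleGraph V} {H : SimpleGraph W}

lemma hasCycleLength.map {m : ℕ} {f : G →g H} (hf : Function.Injective f)
    (h : hasCycleLength G m) : hasCycleLength H m := by
  obtain ⟨a, w, hw, rfl⟩ := h
  exact ⟨f a, w.map f, hw.map hf, w.length_map f⟩

lemma isPath_tail_dropLast_of_isCycle {v : V} {p : G.Walk v v} (hp : p.IsCycle) :
    p.tail.dropLast.IsPath ∧ v ∉ p.tail.dropLast.support := by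
  have hnil : ¬ p.tail.Nil := by
    have := hp.three_le_length
    rw [← Walk.length_eq_zero_iff, Walk.length_tail]
    omega
  have hnodup := hp.isPath_tail.support_nodup
  rw [← Walk.dropLast_support_concat, List.nodup_append', List.disjoint_singleton] at hnodup
  exact ⟨hp.isPath_tail.dropLast, Walk.support_dropLast hnil ▸ hnodup.2.2⟩

lemma exists_isPath_notMem_support_of_isCycle {u : V} {p : G.Walk u u} (hp : p.IsCycle) (v : V) :
    ∃ (a b : V) (q : G.Walk a b), q.IsPath ∧ v ∉ q.support ∧ p.length ≤ q.length + 2 := by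
  classical
  by_cases hv : v ∈ p.support
  · have hrotate : (p.rotate v hv).IsCycle := (Walk.isCycle_rotate hv).2 hp
    obtain ⟨hpath, hnotMem⟩ := isPath_tail_dropLast_of_isCycle hrotate
    refine ⟨_, _, _, hpath, hnotMem, ?_⟩
    rw [Walk.length_dropLast, Walk.length_tail, Walk.length_rotate]
    omega
  · refine ⟨_, _, p.tail, hp.isPath_tail, fun h ↦ hv ?_, ?_⟩
    · exact List.mem_of_mem_tail (Walk.support_tail_of_not_nil p hp.not_nil ▸ h)
    · rw [Walk.length_tail]
      omega

lemma length_add_one_le_encard_supp_of_isPath {u v : V} {p : G.Walk u v} (hp : p.IsPath) :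
    (p.length + 1 : ℕ) ≤ (G.connectedComponentMk u).supp.encard := by
  classical
  have hsub : (p.support.toFinset : Set V) ⊆ (G.connectedComponentMk u).supp := fun w hw ↦
    ConnectedComponent.sound (p.takeUntil w (List.mem_toFinset.1 hw)).reachable.symm
  calc ((p.length + 1 : ℕ) : ℕ∞) = (p.support.toFinset : Set V).encard := by
        rw [Set.encard_coe_eq_coe_finsetCard, List.toFinset_card_of_nodup hp.support_nodup,
          Walk.length_support]
    _ ≤ (G.connectedComponentMk u).supp.encard := Set.encard_le_encard hsub

end Cycles

section Cone

variable {V : Type*} {G : SimpleGraph V}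

/-- The cone over `G`: the graph obtained from `G` by adding one vertex, the apex `none`, adjacent
to all vertices of `G`. -/
def coneGraph (G : SimpleGraph V) : SimpleGraph (Option V) :=
  starGraph none ⊔ G.map some

lemma coneGraph_adj_some {u v : V} : (coneGraph G).Adj (some u) (some v) ↔ G.Adj u v := by
  rw [coneGraph, sup_adj]
  simp only [starGraph_adj, reduceCtorEq, or_self, and_false, false_or]
  exact map_adj_apply (f := Function.Embedding.some)

lemma ncard_edgeSet_starGraph_add_one [Finite V] (r : V) :
    (starGraph r).edgeSet.ncard + 1 = Nat.card V := by
  classical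
  have := Fintype.ofFinite V
  rw [← coe_edgeFinset, Set.ncard_coe_finset, (isTree_starGraph r).card_edgeFinset,
    Nat.card_eq_fintype_card]

lemma ncard_edgeSet_coneGraph [Finite V] (G : SimpleGraph V) :
    (coneGraph G).edgeSet.ncard = Nat.card V + G.edgeSet.ncard := by
  have hstar : (starGraph (none : Option V)).edgeSet.ncard = Nat.card V :=
    Nat.succ_injective <| (ncard_edgeSet_starGraph_add_one none).trans Finite.card_option
  have hmap : (G.map some).edgeSet.ncard = G.edgeSet.ncard := by
    have himage := edgeSet_map Function.Embedding.some G
    exact himage ▸ Set.ncard_image_of_injective _ (Function.Embedding.injective _)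
  have hdisj : Disjoint (starGraph none).edgeSet (G.map some).edgeSet := by
    rw [disjoint_edgeSet, SimpleGraph.disjoint_left]
    rintro _ _ hadj ⟨-, u, v, -, rfl, rfl⟩
    simp at hadj
  rw [coneGraph, edgeSet_sup, Set.ncard_union_eq hdisj, hstar, hmap]

lemma exists_walk_map_support_eq {x y : Option V} (q : (coneGraph G).Walk x y)
    (hq : none ∉ q.support) :
    ∃ (u v : V) (r : G.Walk u v), x = some u ∧ r.support.map some = q.support := by
  induction q with
  | nil =>
    obtain ⟨u, rfl⟩ := Option.ne_none_iff_exists'.1 (by simpa [eq_comm] using hq)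
    exact ⟨u, u, .nil, rfl, rfl⟩
  | @cons x _ _ hadj q ih =>
    rw [Walk.support_cons, List.mem_cons, not_or] at hq
    obtain ⟨u, rfl⟩ := Option.ne_none_iff_exists'.1 (Ne.symm hq.1)
    obtain ⟨u', v, r, rfl, hr⟩ := ih hq.2
    exact ⟨u, v, .cons (coneGraph_adj_some.1 hadj) r, rfl, by simp [hr]⟩

lemma length_le_of_isCycle_coneGraph {n : ℕ} (hG : ∀ C : G.ConnectedComponent, C.supp.encard ≤ n)
    {x : Option V} {p : (coneGraph G).Walk x x} (hp : p.IsCycle) : p.length ≤ n + 1 := by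
  obtain ⟨_, _, q, hq, hapex, hpq⟩ := exists_isPath_notMem_support_of_isCycle hp none
  obtain ⟨u, v, r, -, hrq⟩ := exists_walk_map_support_eq q hapex
  have hr : r.IsPath := .mk' <| .of_map some (hrq ▸ hq.support_nodup)
  have hlen : r.length = q.length := by
    simpa using congrArg List.length hrq
  have hrn : r.length + 1 ≤ n :=
    Nat.cast_le.1 <| (length_add_one_le_encard_supp_of_isPath hr).trans (hG _)
  omega

end Cone

section DisjointCliques

variable {ι α : Type*}

/-- The disjoint union of copies of the complete graph on `α`, one for each element of `ι`,
encoded as the box product of the edgeless graph on `ι` with the complete graph on `α`. -/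
abbrev disjointCliques (ι α : Type*) : SimpleGraph (ι × α) :=
  (⊥ : SimpleGraph ι) □ (⊤ : SimpleGraph α)

lemma encard_supp_disjointCliques_le (C : (disjointCliques ι α).ConnectedComponent) :
    C.supp.encard ≤ ENat.card α := by
  induction C using ConnectedComponent.ind with | _ x
  have hsub : ((disjointCliques ι α).connectedComponentMk x).supp ⊆ Prod.mk x.1 '' Set.univ := by
    intro y hy
    have hfst : y.1 = x.1 := reachable_bot.1 (reachable_boxProd.1 (ConnectedComponent.exact hy)).1
    exact ⟨y.2, Set.mem_univ _, Prod.ext hfst.symm rfl⟩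
  calc _ ≤ (Prod.mk x.1 '' (Set.univ : Set α)).encard := Set.encard_le_encard hsub
    _ ≤ (Set.univ : Set α).encard := Set.encard_image_le _ _
    _ = ENat.card α := Set.encard_univ α

lemma ncard_edgeSet_disjointCliques (ι α : Type*) [Finite ι] [Finite α] :
    (disjointCliques ι α).edgeSet.ncard = Nat.card ι * (Nat.card α).choose 2 := by
  classical
  have := Fintype.ofFinite ι
  have := Fintype.ofFinite α
  have hsum := (disjointCliques ι α).sum_degrees_eq_twice_card_edges
  simp only [degree_boxProd, bot_degree, complete_graph_degree, zero_add, Finset.sum_const,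
    Finset.card_univ, Fintype.card_prod, smul_eq_mul] at hsum
  have hchoose : Fintype.card α * (Fintype.card α - 1) = 2 * (Fintype.card α).choose 2 := by
    rw [Nat.choose_two_right, Nat.two_mul_div_two_of_even (Nat.even_mul_pred_self _)]
  rw [← coe_edgeFinset, Set.ncard_coe_finset, Nat.card_eq_fintype_card, Nat.card_eq_fintype_card]
  refine Nat.eq_of_mul_eq_mul_left two_pos ?_
  rw [← hsum, mul_assoc, hchoose, mul_left_comm]

end DisjointCliques

theorem stmt_4 (k : ℕ) (hk : 1 ≤ k) :
    ∃ G : SimpleGraph (Fin (3 * k + 1)),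
      G.edgeSet.ncard = 6 * k ∧ ∀ m, 5 ≤ m → ¬ hasCycleLength G m := by
  have hcard : Fintype.card (Option (Fin k × Fin 3)) = 3 * k + 1 := by simp [mul_comm]
  let W := coneGraph (disjointCliques (Fin k) (Fin 3))
  let e : W ≃g W.overFin hcard := W.overFinIso hcard
  refine ⟨W.overFin hcard, ?_, fun m hm hcycle ↦ ?_⟩
  · calc (W.overFin hcard).edgeSet.ncard = W.edgeSet.ncard := (Nat.card_congr e.mapEdgeSet).symm
      _ = k * 3 + k * Nat.choose 3 2 := by
        simp [W, ncard_edgeSet_coneGraph, ncard_edgeSet_disjointCliques]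
      _ = 6 * k := by
        rw [show Nat.choose 3 2 = 3 from rfl]
        ring
  · obtain ⟨x, p, hp, rfl⟩ := hcycle.map (f := e.symm.toHom) e.symm.injective
    have hp4 : p.length ≤ 3 + 1 :=
      length_le_of_isCycle_coneGraph (fun C ↦ by simpa using encard_supp_disjointCliques_le C) hp
    omega
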